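/- Let a ∈ {0,1}^{n×n} be the symmetric, zero-diagonal adjacency matrix of a simple undirected graph G, and let g: ℝ → ℝ be even, 2π-periodic, with values in [−1, 1], satisfying g(π) = −1, 1 − g(x) ≤ 2x/π for all x ∈ [0, π], and g(x) > −1 for x ∈ [0, π). Suppose G has a unique max-cut partition up to swapping the two sides, given by the pair {V₁*, V₂*}. Then every global minimizer θ ∈ ℝ^n of L(θ; a, g) = ∑_{1≤i<j≤n} a_{ij} g(θ_i − θ_j) is binarized up to a global rotation: for all i, j, θ_i − θ_j is an integer multiple of π, and the induced partition {{i : θ_i − θ_1 ∈ 2πℤ}, {i : θ_i − θ_1 − π ∈ 2πℤ}} equals {V₁*, V₂*}. -/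

import Mathlib

open Real Finset

/-!
Cutting the circle along a uniformly random diameter separates two points with probability equal
to their angular distance divided by `π`. Rounding a configuration `θ` by such a random cut
therefore produces an expected cut weight `(∑ i j, w i j * dist (θ i) (θ j)) / π`, and the bound
`1 - g x ≤ 2 * x / π` makes this at least `(∑ i j, w i j - energy w g θ) / 2`. When `θ` is a
minimizer, comparison with the configuration that places the two sides of a maximum cut at `0` and
`π` shows that the expected cut weight is maximal, so almost every random cut is maximum. If the
maximum cut is unique, any two points of `θ` are then separated almost surely or almost never: they
are antipodal or equal, according to whether the maximum cut separates their indices.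
-/

open MeasureTheory

lemma ae_eq_const_of_le_of_le_integral {f : ℝ → ℝ} {a b c : ℝ} (hab : a ≤ b)
    (hf : IntervalIntegrable f volume a b) (hle : ∀ t, f t ≤ c)
    (h_int : (b - a) * c ≤ ∫ t in a..b, f t) :
    ∀ᵐ t ∂volume.restrict (Set.uIoc a b), f t = c := by
  rw [Set.uIoc_of_le hab]
  refine (integral_eq_iff_of_ae_le hf.1 (integrable_const c) (.of_forall hle)).1 ?_
  simp only [← intervalIntegral.integral_of_le hab]
  refine le_antisymm ?_ (by simpa using h_int)
  exact intervalIntegral.integral_mono hab hf intervalIntegrable_const hle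

section CutMetric

variable {α : Type*}

open Classical in
/-- The cut semimetric of `S`: the distance of two points is `1` if `S` separates them and `0`
otherwise. Summing it against edge weights gives cut weights. -/
noncomputable def cutMetric (S : Set α) (x y : α) : ℝ :=
  if x ∈ S ↔ y ∈ S then 0 else 1

lemma cutMetric_eq_zero_iff {S : Set α} {x y : α} :
    cutMetric S x y = 0 ↔ (x ∈ S ↔ y ∈ S) := by
  simp [cutMetric]

lemma cutMetric_eq_one_iff {S : Set α} {x y : α} :
    cutMetric S x y = 1 ↔ ¬(x ∈ S ↔ y ∈ S) := by
  simp [cutMetric]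

lemma cutMetric_congr {S T : Set α} {x y x' y' : α}
    (h : (x ∈ S ↔ y ∈ S) ↔ (x' ∈ T ↔ y' ∈ T)) : cutMetric S x y = cutMetric T x' y' := by
  classical exact if_congr h rfl rfl

lemma cutMetric_comm (S : Set α) (x y : α) : cutMetric S x y = cutMetric S y x :=
  cutMetric_congr iff_comm

lemma cutMetric_compl (S : Set α) : cutMetric Sᶜ = cutMetric S :=
  funext₂ fun _ _ ↦ cutMetric_congr not_iff_not

lemma abs_cutMetric_le_one (S : Set α) (x y : α) : |cutMetric S x y| ≤ 1 := by
  unfold cutMetric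
  split_ifs <;> simp

lemma measurable_cutMetric_comp {β : Type*} [MeasurableSpace α] [MeasurableSpace β] {S : Set α}
    (hS : MeasurableSet S) {f h : β → α} (hf : Measurable f) (hh : Measurable h) :
    Measurable fun t ↦ cutMetric S (f t) (h t) := by
  have h_mem {f : β → α} (hf : Measurable f) : Measurable fun t ↦ f t ∈ S :=
    measurableSet_setOfPred.1 (hf hS)
  exact .ite ((h_mem hf).iff (h_mem hh)).setOf measurable_const measurable_const

end CutMetric

section Angle

lemma apply_abs_toReal_of_even_of_periodic {β : Type*} {f : ℝ → β} (heven : Function.Even f)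
    (hper : Function.Periodic f (2 * π)) (x : ℝ) : f |(x : Angle).toReal| = f x := by
  obtain ⟨k, hk⟩ := Angle.angle_eq_iff_two_pi_dvd_sub.1 (Angle.coe_toReal (x : Angle))
  have habs : f |(x : Angle).toReal| = f (x : Angle).toReal := by
    rcases abs_choice (x : Angle).toReal with h | h <;> rw [h]
    exact heven _
  rw [habs, ← sub_add_cancel (x : Angle).toReal x, hk, add_comm, mul_comm]
  exact hper.int_mul k x

lemma abs_toReal_coe_eq_zero_iff {x : ℝ} :
    |(x : Angle).toReal| = 0 ↔ ∃ k : ℤ, x = 2 * π * k := by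
  rw [abs_eq_zero, Angle.toReal_eq_zero_iff, ← Angle.coe_zero, Angle.angle_eq_iff_two_pi_dvd_sub,
    sub_zero]

lemma abs_toReal_coe_eq_pi_iff {x : ℝ} :
    |(x : Angle).toReal| = π ↔ ∃ k : ℤ, x - π = 2 * π * k := by
  rw [abs_eq pi_pos.le, or_iff_left (Angle.neg_pi_lt_toReal x).ne', Angle.toReal_eq_pi_iff,
    Angle.angle_eq_iff_two_pi_dvd_sub]

lemma pi_mul_one_sub_coupling_le {g : ℝ → ℝ} (heven : Function.Even g)
    (hper : Function.Periodic g (2 * π)) (hratio : ∀ x ∈ Set.Icc 0 π, 1 - g x ≤ 2 * x / π)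
    (x : ℝ) : π * (1 - g x) ≤ 2 * |(x : Angle).toReal| := by
  have h := hratio |(x : Angle).toReal| ⟨abs_nonneg _, Angle.abs_toReal_le_pi _⟩
  rwa [apply_abs_toReal_of_even_of_periodic heven hper, le_div_iff₀' pi_pos] at h

end Angle

section HalfCircle

/-- The half-circle `[0, π)` modulo `2π`, as a subset of the real line. Being half-open, it is
exchanged with its complement by the half-turn `x ↦ x + π`. -/
def halfCircle : Set ℝ := {x | Even ⌊x / π⌋}

lemma add_pi_mem_halfCircle_iff {x : ℝ} : x + π ∈ halfCircle ↔ x ∉ halfCircle := by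
  simp [halfCircle, add_div, pi_ne_zero]

lemma Ico_subset_halfCircle : Set.Ico 0 π ⊆ halfCircle := fun x hx ↦ by
  have hfloor : ⌊x / π⌋ = 0 :=
    Int.floor_eq_zero_iff.2 ⟨div_nonneg hx.1 pi_pos.le, (div_lt_one pi_pos).2 hx.2⟩
  simp [halfCircle, hfloor]

lemma measurableSet_halfCircle : MeasurableSet halfCircle :=
  Int.measurable_floor.comp (measurable_id.div_const π) (.of_discrete (s := {n | Even n}))

lemma periodic_cutMetric_halfCircle (x y : ℝ) :
    Function.Periodic (fun t ↦ cutMetric halfCircle (x + t) (y + t)) π := fun _ ↦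
  cutMetric_congr <| by simp only [← add_assoc, add_pi_mem_halfCircle_iff, not_iff_not]

lemma intervalIntegrable_cutMetric_halfCircle (x y a b : ℝ) :
    IntervalIntegrable (fun t ↦ cutMetric halfCircle (x + t) (y + t)) volume a b :=
  (intervalIntegrable_const (c := (1 : ℝ))).mono_fun
    (measurable_cutMetric_comp measurableSet_halfCircle (measurable_const_add x)
      (measurable_const_add y)).aestronglyMeasurable
    (.of_forall fun t ↦ by simpa using abs_cutMetric_le_one _ _ _)

lemma integral_cutMetric_halfCircle_eq_sub (x y : ℝ) :
    ∫ t in 0..π, cutMetric halfCircle (x + t) (y + t) =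
      ∫ t in 0..π, cutMetric halfCircle (x - y + t) t := by
  calc ∫ t in 0..π, cutMetric halfCircle (x + t) (y + t)
      = ∫ t in 0..π, cutMetric halfCircle (x - y + (t + y)) (t + y) := by
        simp only [add_comm _ y, ← add_assoc, add_sub_cancel]
    _ = ∫ t in (0 + y)..(π + y), cutMetric halfCircle (x - y + t) t :=
        intervalIntegral.integral_comp_add_right
          (fun t ↦ cutMetric halfCircle (x - y + t) t) y
    _ = ∫ t in 0..π, cutMetric halfCircle (x - y + t) t := by
        simpa [add_comm] using
          (periodic_cutMetric_halfCircle (x - y) 0).intervalIntegral_add_eq y 0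

lemma integral_cutMetric_halfCircle_of_mem_Icc {u : ℝ} (hu : u ∈ Set.Icc 0 π) :
    ∫ t in 0..π, cutMetric halfCircle (u + t) t = u := by
  obtain ⟨hu₀, huπ⟩ := hu
  have h_int (a b : ℝ) :
      IntervalIntegrable (fun t ↦ cutMetric halfCircle (u + t) t) volume a b := by
    simpa using intervalIntegrable_cutMetric_halfCircle u 0 a b
  have h_before : ∫ t in 0..(π - u), cutMetric halfCircle (u + t) t = ∫ _ in 0..(π - u), 0 := by
    refine intervalIntegral.integral_congr_Ioo_of_le (by linarith) fun t ⟨ht₀, htu⟩ ↦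
      cutMetric_eq_zero_iff.2 (iff_of_true ?_ ?_)
    · exact Ico_subset_halfCircle ⟨by linarith, by linarith⟩
    · exact Ico_subset_halfCircle ⟨ht₀.le, by linarith⟩
  have h_after : ∫ t in (π - u)..π, cutMetric halfCircle (u + t) t = ∫ _ in (π - u)..π, 1 := by
    refine intervalIntegral.integral_congr_Ioo_of_le (by linarith) fun t ⟨htu, htπ⟩ ↦
      cutMetric_eq_one_iff.2 ?_
    have h_out : u + t ∉ halfCircle := by
      rw [← sub_add_cancel (u + t) π, add_pi_mem_halfCircle_iff, not_not]
      exact Ico_subset_halfCircle ⟨by linarith, by linarith⟩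
    have h_in : t ∈ halfCircle := Ico_subset_halfCircle ⟨by linarith, htπ⟩
    exact fun h ↦ h_out (h.2 h_in)
  rw [← intervalIntegral.integral_add_adjacent_intervals (h_int 0 (π - u)) (h_int (π - u) π),
    h_before, h_after]
  simp

theorem integral_cutMetric_halfCircle (x y : ℝ) :
    ∫ t in 0..π, cutMetric halfCircle (x + t) (y + t) = |((x - y : ℝ) : Angle).toReal| := by
  let φ : ℝ → ℝ := fun u ↦ ∫ t in 0..π, cutMetric halfCircle (u + t) t
  have heven : Function.Even φ := fun u ↦ by
    simpa [cutMetric_comm, φ] using (integral_cutMetric_halfCircle_eq_sub 0 u).symm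
  have hper : Function.Periodic φ (2 * π) := fun u ↦ by
    have h_turn (t : ℝ) : u + 2 * π + t ∈ halfCircle ↔ u + t ∈ halfCircle := by
      rw [show u + 2 * π + t = u + t + π + π by ring, add_pi_mem_halfCircle_iff,
        add_pi_mem_halfCircle_iff, not_not]
    exact intervalIntegral.integral_congr fun t _ ↦ cutMetric_congr (by rw [h_turn])
  calc ∫ t in 0..π, cutMetric halfCircle (x + t) (y + t)
      = φ (x - y) := integral_cutMetric_halfCircle_eq_sub x y
    _ = φ |((x - y : ℝ) : Angle).toReal| :=
        (apply_abs_toReal_of_even_of_periodic heven hper _).symm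
    _ = |((x - y : ℝ) : Angle).toReal| :=
        integral_cutMetric_halfCircle_of_mem_Icc ⟨abs_nonneg _, Angle.abs_toReal_le_pi _⟩

/-- The side of the cut obtained from the phases `θ` by rotating them by `t` and rounding them to
the half-circle they lie in. -/
def halfCircleCut {ι : Type*} (θ : ι → ℝ) (t : ℝ) : Set ι := {i | θ i + t ∈ halfCircle}

lemma intervalIntegrable_cutMetric_halfCircleCut {ι : Type*} (θ : ι → ℝ) (i j : ι) (a b : ℝ) :
    IntervalIntegrable (fun t ↦ cutMetric (halfCircleCut θ t) i j) volume a b :=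
  intervalIntegrable_cutMetric_halfCircle (θ i) (θ j) a b

lemma integral_cutMetric_halfCircleCut {ι : Type*} (θ : ι → ℝ) (i j : ι) :
    ∫ t in 0..π, cutMetric (halfCircleCut θ t) i j = |((θ i - θ j : ℝ) : Angle).toReal| :=
  integral_cutMetric_halfCircle (θ i) (θ j)

end HalfCircle

section MaxCut

variable {ι : Type*} [Fintype ι]

/-- The weight of the cut `{S, Sᶜ}`. Weights belong to ordered pairs, so that a symmetric `w` counts
every edge twice. -/
noncomputable def cutWeight (w : ι → ι → ℝ) (S : Set ι) : ℝ :=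
  ∑ i, ∑ j, w i j * cutMetric S i j

/-- `{V, Vᶜ}` is the only cut of maximum weight. -/
structure IsUniqueMaxCut (w : ι → ι → ℝ) (V : Set ι) : Prop where
  cutWeight_le (S : Set ι) : cutWeight w S ≤ cutWeight w V
  eq_or_eq_compl {S : Set ι} (hS : cutWeight w S = cutWeight w V) : S = V ∨ S = Vᶜ

/-- The energy of the phases `θ` for the coupling `g`, with pairs weighted as in `cutWeight`. -/
def energy (w : ι → ι → ℝ) (g : ℝ → ℝ) (θ : ι → ℝ) : ℝ :=
  ∑ i, ∑ j, w i j * g (θ i - θ j)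

variable {w : ι → ι → ℝ} {g : ℝ → ℝ} {θ : ι → ℝ} {V : Set ι}

lemma energy_indicator_pi (heven : Function.Even g) (h_zero : g 0 = 1) (h_pi : g π = -1)
    (S : Set ι) :
    energy w g (S.indicator fun _ ↦ π) = ∑ i, ∑ j, w i j - 2 * cutWeight w S := by
  have h_coupling (i j : ι) :
      g (S.indicator (fun _ ↦ π) i - S.indicator (fun _ ↦ π) j) = 1 - 2 * cutMetric S i j := by
    by_cases hi : i ∈ S <;> by_cases hj : j ∈ S <;>
      simp [cutMetric, hi, hj, h_zero, h_pi, heven π] <;> norm_num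
  simp only [energy, cutWeight, h_coupling, mul_sum, ← sum_sub_distrib]
  exact sum_congr rfl fun i _ ↦ sum_congr rfl fun j _ ↦ by ring

lemma intervalIntegrable_sum_mul_cutMetric (w : ι → ι → ℝ) (θ : ι → ℝ) (i : ι) (a b : ℝ) :
    IntervalIntegrable (fun t ↦ ∑ j, w i j * cutMetric (halfCircleCut θ t) i j) volume a b := by
  simpa only [sum_fn] using IntervalIntegrable.sum univ fun j _ ↦
    (intervalIntegrable_cutMetric_halfCircleCut θ i j a b).const_mul (w i j)

lemma intervalIntegrable_cutWeight_halfCircleCut (w : ι → ι → ℝ) (θ : ι → ℝ) (a b : ℝ) :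
    IntervalIntegrable (fun t ↦ cutWeight w (halfCircleCut θ t)) volume a b := by
  simpa only [cutWeight, sum_fn] using
    IntervalIntegrable.sum univ fun i _ ↦ intervalIntegrable_sum_mul_cutMetric w θ i a b

lemma integral_cutWeight_halfCircleCut (w : ι → ι → ℝ) (θ : ι → ℝ) :
    ∫ t in 0..π, cutWeight w (halfCircleCut θ t) =
      ∑ i, ∑ j, w i j * |((θ i - θ j : ℝ) : Angle).toReal| := by
  simp only [cutWeight, ← integral_cutMetric_halfCircleCut, ← intervalIntegral.integral_const_mul]
  rw [intervalIntegral.integral_finsetSum fun i _ ↦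
    intervalIntegrable_sum_mul_cutMetric w θ i 0 π]
  exact sum_congr rfl fun i _ ↦ intervalIntegral.integral_finsetSum fun j _ ↦
    (intervalIntegrable_cutMetric_halfCircleCut θ i j 0 π).const_mul (w i j)

lemma pi_mul_sum_sub_energy_le (hw : ∀ i j, 0 ≤ w i j) (heven : Function.Even g)
    (hper : Function.Periodic g (2 * π)) (hratio : ∀ x ∈ Set.Icc 0 π, 1 - g x ≤ 2 * x / π) :
    π * (∑ i, ∑ j, w i j - energy w g θ) ≤
      2 * ∫ t in 0..π, cutWeight w (halfCircleCut θ t) := by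
  rw [integral_cutWeight_halfCircleCut]
  simp only [energy, mul_sum, ← sum_sub_distrib]
  refine sum_le_sum fun i _ ↦ sum_le_sum fun j _ ↦ ?_
  calc π * (w i j - w i j * g (θ i - θ j))
      = w i j * (π * (1 - g (θ i - θ j))) := by ring
    _ ≤ w i j * (2 * |((θ i - θ j : ℝ) : Angle).toReal|) :=
        mul_le_mul_of_nonneg_left (pi_mul_one_sub_coupling_le heven hper hratio _) (hw i j)
    _ = 2 * (w i j * |((θ i - θ j : ℝ) : Angle).toReal|) := by ring

theorem ae_cutWeight_halfCircleCut_eq (hw : ∀ i j, 0 ≤ w i j) (heven : Function.Even g)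
    (hper : Function.Periodic g (2 * π)) (h_zero : g 0 = 1) (h_pi : g π = -1)
    (hratio : ∀ x ∈ Set.Icc 0 π, 1 - g x ≤ 2 * x / π)
    (hmax : ∀ S, cutWeight w S ≤ cutWeight w V)
    (hmin : energy w g θ ≤ energy w g (V.indicator fun _ ↦ π)) :
    ∀ᵐ t ∂volume.restrict (Set.uIoc 0 π), cutWeight w (halfCircleCut θ t) = cutWeight w V := by
  refine ae_eq_const_of_le_of_le_integral pi_pos.le
    (intervalIntegrable_cutWeight_halfCircleCut w θ 0 π) (fun t ↦ hmax _) ?_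
  rw [energy_indicator_pi heven h_zero h_pi] at hmin
  have h_energy : 2 * cutWeight w V ≤ ∑ i, ∑ j, w i j - energy w g θ := by linarith
  linarith [mul_le_mul_of_nonneg_left h_energy pi_pos.le,
    pi_mul_sum_sub_energy_le (θ := θ) hw heven hper hratio]

lemma IsUniqueMaxCut.abs_toReal_sub_eq (hV : IsUniqueMaxCut w V)
    (hθ : ∀ᵐ t ∂volume.restrict (Set.uIoc 0 π),
      cutWeight w (halfCircleCut θ t) = cutWeight w V) (i j : ι) :
    |((θ i - θ j : ℝ) : Angle).toReal| = π * cutMetric V i j := by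
  have h_cut : ∀ᵐ t ∂volume.restrict (Set.uIoc 0 π),
      cutMetric (halfCircleCut θ t) i j = cutMetric V i j := by
    filter_upwards [hθ] with t ht
    rcases hV.eq_or_eq_compl ht with h | h <;> simp only [h, cutMetric_compl]
  rw [← integral_cutMetric_halfCircleCut, intervalIntegral.integral_congr_ae_restrict h_cut]
  simp

lemma isUniqueMaxCut_coe_of_bipartition [DecidableEq ι] {c : Finset ι → Finset ι → ℝ}
    (hc : ∀ W, c W Wᶜ = cutWeight w W) {V : Finset ι}
    (hmax : ∀ W₁ W₂, W₁ ∪ W₂ = univ → Disjoint W₁ W₂ → c W₁ W₂ ≤ c V Vᶜ)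
    (huniq : ∀ W₁ W₂, W₁ ∪ W₂ = univ → Disjoint W₁ W₂ → c W₁ W₂ = c V Vᶜ →
      (W₁ = V ∧ W₂ = Vᶜ) ∨ (W₁ = Vᶜ ∧ W₂ = V)) :
    IsUniqueMaxCut w V where
  cutWeight_le S := by
    lift S to Finset ι using S.toFinite with W
    simpa only [hc] using hmax W Wᶜ (union_compl W) disjoint_compl_right
  eq_or_eq_compl {S} hS := by
    lift S to Finset ι using S.toFinite with W
    rw [← hc, ← hc] at hS
    have hW := huniq W Wᶜ (union_compl W) disjoint_compl_right hS
    exact_mod_cast hW.imp And.left And.left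

end MaxCut

theorem unique_maxcut_minimizers_are_binarized_general {ι : Type*} [Fintype ι] {w : ι → ι → ℝ}
    (hw : ∀ i j, 0 ≤ w i j) {g : ℝ → ℝ} (heven : Function.Even g)
    (hper : Function.Periodic g (2 * π)) (h_zero : g 0 = 1) (h_pi : g π = -1)
    (hratio : ∀ x ∈ Set.Icc 0 π, 1 - g x ≤ 2 * x / π) {V : Set ι} (hV : IsUniqueMaxCut w V)
    {θ : ι → ℝ} (hmin : ∀ θ', energy w g θ ≤ energy w g θ') (i₀ : ι) :
    (∀ i j, ∃ k : ℤ, θ i - θ j = k * π) ∧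
      (({i | ∃ k : ℤ, θ i - θ i₀ = 2 * π * k} = V ∧
          {i | ∃ k : ℤ, θ i - θ i₀ - π = 2 * π * k} = Vᶜ) ∨
        ({i | ∃ k : ℤ, θ i - θ i₀ = 2 * π * k} = Vᶜ ∧
          {i | ∃ k : ℤ, θ i - θ i₀ - π = 2 * π * k} = V)) := by
  have h_dist := hV.abs_toReal_sub_eq
    (ae_cutWeight_halfCircleCut_eq hw heven hper h_zero h_pi hratio hV.cutWeight_le (hmin _))
  have h_same (i j : ι) : (∃ k : ℤ, θ i - θ j = 2 * π * k) ↔ (i ∈ V ↔ j ∈ V) := by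
    rw [← abs_toReal_coe_eq_zero_iff, h_dist, mul_eq_zero_iff_left pi_ne_zero,
      cutMetric_eq_zero_iff]
  have h_opposite (i j : ι) : (∃ k : ℤ, θ i - θ j - π = 2 * π * k) ↔ ¬(i ∈ V ↔ j ∈ V) := by
    rw [← abs_toReal_coe_eq_pi_iff, h_dist, mul_eq_left₀ pi_ne_zero, cutMetric_eq_one_iff]
  refine ⟨fun i j ↦ ?_, ?_⟩
  · by_cases hij : i ∈ V ↔ j ∈ V
    · obtain ⟨k, hk⟩ := (h_same i j).2 hij
      exact ⟨2 * k, by push_cast; linarith⟩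
    · obtain ⟨k, hk⟩ := (h_opposite i j).2 hij
      exact ⟨2 * k + 1, by push_cast; linarith⟩
  · by_cases h₀ : i₀ ∈ V
    · exact .inl ⟨by ext; simp [h_same, h₀], by ext; simp [h_opposite, h₀]⟩
    · exact .inr ⟨by ext; simp [h_same, h₀], by ext; simp [h_opposite, h₀]⟩

section OrderedPairs

variable {ι : Type*} [LinearOrder ι]

/-- The weights `a` restricted to increasing pairs, so that each edge of an undirected graph is
counted exactly once. -/
def increasingWeight (a : ι → ι → ℝ) (i j : ι) : ℝ := if i < j then a i j else 0

lemma increasingWeight_nonneg {a : ι → ι → ℝ} (ha : ∀ i j, 0 ≤ a i j) (i j : ι) :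
    0 ≤ increasingWeight a i j :=
  ite_nonneg (ha i j) le_rfl

variable [Fintype ι]

lemma energy_increasingWeight (a : ι → ι → ℝ) (g : ℝ → ℝ) (θ : ι → ℝ) :
    energy (increasingWeight a) g θ = ∑ i, ∑ j, if i < j then a i j * g (θ i - θ j) else 0 := by
  simp only [energy, increasingWeight, ite_mul, zero_mul]

lemma cutWeight_increasingWeight (a : ι → ι → ℝ) (W : Finset ι) :
    cutWeight (increasingWeight a) W = ∑ i, ∑ j,
      if i < j ∧ ((i ∈ W ∧ j ∈ Wᶜ) ∨ (i ∈ Wᶜ ∧ j ∈ W)) then a i j else 0 := by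
  refine sum_congr rfl fun i _ ↦ sum_congr rfl fun j _ ↦ ?_
  by_cases hi : i ∈ W <;> by_cases hj : j ∈ W <;> simp [increasingWeight, cutMetric, hi, hj]

end OrderedPairs

/-- Suppose `g` is even, `2π`-periodic, takes values in `[-1,1]`, has
`g(π) = -1`, satisfies `1 - g(x) ≤ 2x/π` on `[0, π]` and `g(x) > -1` on `[0, π)`, and the
graph has a unique max-cut partition pair `{V₁*, V₂*}`. Then every global minimizer `θ`
of `L(θ; a, g) = ∑_{i<j} a_ij g(θ_i - θ_j)` is binarized up to a global rotation: all
pairwise differences `θ_i - θ_j` are integer multiples of `π`, and the induced partition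
equals `{V₁*, V₂*}`. -/
theorem unique_maxcut_minimizers_are_binarized
    (n : ℕ) (hn : 0 < n) (a : Fin n → Fin n → ℝ)
    (hsym : ∀ i j, a i j = a j i) (hdiag : ∀ i, a i i = 0)
    (h01 : ∀ i j, a i j = 0 ∨ a i j = 1)
    (g : ℝ → ℝ)
    (heven : ∀ x, g (-x) = g x)
    (hper : ∀ x, g (x + 2 * Real.pi) = g x)
    (hbd : ∀ x, g x ∈ Set.Icc (-1 : ℝ) 1)
    (hgpi : g Real.pi = -1)
    (hratio : ∀ x ∈ Set.Icc (0 : ℝ) Real.pi, 1 - g x ≤ 2 * x / Real.pi)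
    (hneg : ∀ x ∈ Set.Ico (0 : ℝ) Real.pi, -1 < g x)
    (cutval : Finset (Fin n) → Finset (Fin n) → ℝ)
    (hcutval : ∀ W₁ W₂ : Finset (Fin n), cutval W₁ W₂ = ∑ i : Fin n, ∑ j : Fin n,
        if i < j ∧ ((i ∈ W₁ ∧ j ∈ W₂) ∨ (i ∈ W₂ ∧ j ∈ W₁)) then a i j else 0)
    (V₁ V₂ : Finset (Fin n))
    (hcover : V₁ ∪ V₂ = Finset.univ) (hdisj : Disjoint V₁ V₂)
    (hmax : ∀ W₁ W₂ : Finset (Fin n), W₁ ∪ W₂ = Finset.univ → Disjoint W₁ W₂ →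
        cutval W₁ W₂ ≤ cutval V₁ V₂)
    (huniq : ∀ W₁ W₂ : Finset (Fin n), W₁ ∪ W₂ = Finset.univ → Disjoint W₁ W₂ →
        cutval W₁ W₂ = cutval V₁ V₂ →
        (W₁ = V₁ ∧ W₂ = V₂) ∨ (W₁ = V₂ ∧ W₂ = V₁))
    (L : (Fin n → ℝ) → ℝ)
    (hL : ∀ θ : Fin n → ℝ,
      L θ = ∑ i : Fin n, ∑ j : Fin n, if i < j then a i j * g (θ i - θ j) else 0)
    (θ : Fin n → ℝ)
    (hmin : ∀ θ' : Fin n → ℝ, L θ ≤ L θ') :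
    (∀ i j : Fin n, ∃ k : ℤ, θ i - θ j = k * Real.pi)
    ∧ (({i : Fin n | ∃ k : ℤ, θ i - θ ⟨0, hn⟩ = 2 * Real.pi * k} = (V₁ : Set (Fin n))
          ∧ {i : Fin n | ∃ k : ℤ, θ i - θ ⟨0, hn⟩ - Real.pi = 2 * Real.pi * k}
              = (V₂ : Set (Fin n)))
        ∨ ({i : Fin n | ∃ k : ℤ, θ i - θ ⟨0, hn⟩ = 2 * Real.pi * k} = (V₂ : Set (Fin n))
          ∧ {i : Fin n | ∃ k : ℤ, θ i - θ ⟨0, hn⟩ - Real.pi = 2 * Real.pi * k}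
              = (V₁ : Set (Fin n)))) := by
  have hg_zero : g 0 = 1 :=
    le_antisymm (hbd 0).2 (by simpa using hratio 0 (Set.left_mem_Icc.2 pi_pos.le))
  have ha_nonneg (i j : Fin n) : 0 ≤ a i j := by rcases h01 i j with h | h <;> simp [h]
  obtain rfl : V₂ = V₁ᶜ := (IsCompl.compl_eq ⟨hdisj, codisjoint_iff.2 hcover⟩).symm
  have hV : IsUniqueMaxCut (increasingWeight a) (V₁ : Set (Fin n)) :=
    isUniqueMaxCut_coe_of_bipartition
      (fun W ↦ (hcutval W Wᶜ).trans (cutWeight_increasingWeight a W).symm) hmax huniq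
  simp only [hL, ← energy_increasingWeight] at hmin
  simpa only [coe_compl] using unique_maxcut_minimizers_are_binarized_general
    (increasingWeight_nonneg ha_nonneg) heven hper hg_zero hgpi hratio hV hmin ⟨0, hn⟩
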